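/- There exists a constant C > 0, depending only on n, κ1 and C₀, such that for every x = (x', x_n) ∈ Ω₁ and all tangential indices α, β ∈ {1,…,n−1}: |∂_α∂_β ū(x)| ≤ C/(ε + |x'|²); |∂_α∂_n ū(x)| ≤ C·|x'|/(ε + |x'|²)²; and ∂_n∂_n ū(x) = 0. -/

import Mathlib

open MeasureTheory Metric Finset

noncomputable section

/-- `ℝ^{n-1}`, the horizontal (tangential) variables `x'`. -/
abbrev Ep (n : ℕ) := EuclideanSpace ℝ (Fin (n - 1))

/-- `ℝ^n = ℝ^{n-1} × ℝ`, points written `x = (x', x_n)`. -/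
abbrev Efull (n : ℕ) := Ep n × ℝ

/-- The narrow region `Ω_r`. -/
def Omega (n : ℕ) (ε : ℝ) (h1 h2 : Ep n → ℝ) (r : ℝ) : Set (Efull n) :=
  {x | ‖x.1‖ < r ∧ -ε/2 + h2 x.1 < x.2 ∧ x.2 < ε/2 + h1 x.1}

/-- Top boundary `Γ_r⁺`. -/
def Gammap (n : ℕ) (ε : ℝ) (h1 : Ep n → ℝ) (r : ℝ) : Set (Efull n) :=
  {x | ‖x.1‖ ≤ r ∧ x.2 = ε/2 + h1 x.1}

/-- Bottom boundary `Γ_r⁻`. -/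
def Gammam (n : ℕ) (ε : ℝ) (h2 : Ep n → ℝ) (r : ℝ) : Set (Efull n) :=
  {x | ‖x.1‖ ≤ r ∧ x.2 = -ε/2 + h2 x.1}

/-- `Ω̂_s(x₀) = {x ∈ Ω_{1/2} : |x' - x₀'| < s}`. -/
def OmegaHat (n : ℕ) (ε : ℝ) (h1 h2 : Ep n → ℝ) (x0 : Efull n) (s : ℝ) : Set (Efull n) :=
  {x | x ∈ Omega n ε h1 h2 (1/2) ∧ ‖x.1 - x0.1‖ < s}

/-- The `n` coordinate directions of `ℝ^{n-1} × ℝ`: the first `n-1` are the horizontal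
Euclidean basis vectors, the last is the vertical direction. -/
def dir (n : ℕ) (α : Fin n) : Efull n :=
  if h : (α : ℕ) < n - 1 then (EuclideanSpace.single (⟨(α : ℕ), h⟩ : Fin (n - 1)) 1, (0:ℝ))
  else (0, 1)

/-- Tangential direction `e_α` for `α ∈ {1, …, n-1}`. -/
def tang (n : ℕ) (α : Fin (n - 1)) : Efull n := (EuclideanSpace.single α 1, (0:ℝ))

/-- Vertical direction `e_n`. -/
def vert (n : ℕ) : Efull n := (0, 1)

/-- Pointwise Laplacian `Δu = Σ_α ∂_α∂_α u`. -/
def lapl (n : ℕ) (u : Efull n → ℝ) (x : Efull n) : ℝ :=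
  ∑ α : Fin n, fderiv ℝ (fun y => fderiv ℝ u y (dir n α)) x (dir n α)

/-- The auxiliary function `ū(x', x_n) = (x_n - h2(x') + ε/2)/(ε + h1(x') - h2(x'))`. -/
def ubar (n : ℕ) (ε : ℝ) (h1 h2 : Ep n → ℝ) (x : Efull n) : ℝ :=
  (x.2 - h2 x.1 + ε/2) / (ε + h1 x.1 - h2 x.1)

/-- The auxiliary function `ũ = φ(x')·ū + ψ(x')·(1 - ū)`. -/
def util (n : ℕ) (ε : ℝ) (h1 h2 φ ψ : Ep n → ℝ) (x : Efull n) : ℝ :=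
  φ x.1 * ubar n ε h1 h2 x + ψ x.1 * (1 - ubar n ε h1 h2 x)

/-- `C²`-norm on the closed unit ball: `sup_{|x'| ≤ 1} (|f| + |∇f| + |∇²f|)`. -/
def C2norm {F : Type*} [NormedAddCommGroup F] [NormedSpace ℝ F] (n : ℕ)
    (f : Ep n → F) : ℝ :=
  ⨆ y : closedBall (0 : Ep n) 1,
    (‖f (y : Ep n)‖ + ‖fderiv ℝ f (y : Ep n)‖ + ‖fderiv ℝ (fderiv ℝ f) (y : Ep n)‖)

/-- `C²(S)`-norm of a function on `ℝ^n`. -/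
def C2normOn (n : ℕ) (S : Set (Efull n)) (f : Efull n → ℝ) : ℝ :=
  ⨆ y : S,
    (‖f (y : Efull n)‖ + ‖fderiv ℝ f (y : Efull n)‖ + ‖fderiv ℝ (fderiv ℝ f) (y : Efull n)‖)

/-- `‖∇f‖_∞ = sup_{|x'| ≤ 1} |∇f(x')|`. -/
def gradSup {F : Type*} [NormedAddCommGroup F] [NormedSpace ℝ F] (n : ℕ) (f : Ep n → F) : ℝ :=
  ⨆ y : closedBall (0 : Ep n) 1, ‖fderiv ℝ f (y : Ep n)‖

/-- `‖∇²f‖_∞ = sup_{|x'| ≤ 1} |∇²f(x')|`. -/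
def hessSup {F : Type*} [NormedAddCommGroup F] [NormedSpace ℝ F] (n : ℕ) (f : Ep n → F) : ℝ :=
  ⨆ y : closedBall (0 : Ep n) 1, ‖fderiv ℝ (fderiv ℝ f) (y : Ep n)‖

/-- The geometric hypotheses on `h1, h2`: `C²` on the closed unit ball, the two graphs
do not touch, flatness at the origin, strict convexity of the gap, and `C²`-bound `κ1`. -/
def HGeom (n : ℕ) (ε κ0 κ1 : ℝ) (h1 h2 : Ep n → ℝ) : Prop :=
  ContDiffOn ℝ 2 h1 (closedBall 0 1) ∧ ContDiffOn ℝ 2 h2 (closedBall 0 1) ∧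
  (∀ y : Ep n, ‖y‖ ≤ 1 → -ε/2 + h2 y < ε/2 + h1 y) ∧
  h1 0 = 0 ∧ h2 0 = 0 ∧ fderiv ℝ h1 0 = 0 ∧ fderiv ℝ h2 0 = 0 ∧
  (∀ v : Ep n, κ0 * ‖v‖^2 ≤ fderiv ℝ (fderiv ℝ (fun y => h1 y - h2 y)) 0 v v) ∧
  C2norm n h1 + C2norm n h2 ≤ κ1

/-- Comparability `(ε + |x'|²)/C₀ ≤ δ(x') ≤ C₀ (ε + |x'|²)`. -/
def DeltaComp (n : ℕ) (ε C₀ : ℝ) (h1 h2 : Ep n → ℝ) : Prop :=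
  ∀ y : Ep n, ‖y‖ ≤ 1 →
    (ε + ‖y‖^2) / C₀ ≤ ε + h1 y - h2 y ∧ ε + h1 y - h2 y ≤ C₀ * (ε + ‖y‖^2)

/-- Hypotheses on the coefficients: `C²`-regularity with total `C²(Ω₁)`-norm at most `κ2`,
boundedness `|A| ≤ Λ`, and the weak ellipticity (Legendre) condition with constant `λ`. -/
def CoeffHyp (n N : ℕ) (ε lam Lam κ2 : ℝ) (h1 h2 : Ep n → ℝ)
    (A : Fin n → Fin n → Fin N → Fin N → Efull n → ℝ)
    (B : Fin n → Fin N → Fin N → Efull n → ℝ)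
    (Cc : Fin n → Fin N → Fin N → Efull n → ℝ)
    (Dc : Fin N → Fin N → Efull n → ℝ) : Prop :=
  (∀ α β i j, ContDiffOn ℝ 2 (A α β i j) (Omega n ε h1 h2 1)) ∧
  (∀ α i j, ContDiffOn ℝ 2 (B α i j) (Omega n ε h1 h2 1)) ∧
  (∀ β i j, ContDiffOn ℝ 2 (Cc β i j) (Omega n ε h1 h2 1)) ∧
  (∀ i j, ContDiffOn ℝ 2 (Dc i j) (Omega n ε h1 h2 1)) ∧
  ((∑ α : Fin n, ∑ β : Fin n, ∑ i : Fin N, ∑ j : Fin N,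
      C2normOn n (Omega n ε h1 h2 1) (A α β i j)) +
   (∑ α : Fin n, ∑ i : Fin N, ∑ j : Fin N, C2normOn n (Omega n ε h1 h2 1) (B α i j)) +
   (∑ β : Fin n, ∑ i : Fin N, ∑ j : Fin N, C2normOn n (Omega n ε h1 h2 1) (Cc β i j)) +
   (∑ i : Fin N, ∑ j : Fin N, C2normOn n (Omega n ε h1 h2 1) (Dc i j)) ≤ κ2) ∧
  (∀ α β i j, ∀ x ∈ Omega n ε h1 h2 1, |A α β i j x| ≤ Lam) ∧
  (∀ ξ : Efull n → EuclideanSpace ℝ (Fin N), ContDiff ℝ (⊤ : ℕ∞) ξ →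
    HasCompactSupport ξ → tsupport ξ ⊆ Omega n ε h1 h2 1 →
    lam * ∫ x in Omega n ε h1 h2 1, ‖fderiv ℝ ξ x‖^2 ≤
      ∫ x in Omega n ε h1 h2 1,
        ∑ α : Fin n, ∑ β : Fin n, ∑ i : Fin N, ∑ j : Fin N,
          A α β i j x * fderiv ℝ ξ x (dir n α) i * fderiv ℝ ξ x (dir n β) j)

/-- `u` is a weak solution of
`∂_α(A^{αβ}_{ij} ∂_β u^j + B^α_{ij} u^j) + C^β_{ij} ∂_β u^j + D_{ij} u^j = 0` in `Ω₁`. -/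
def WeakSol (n N : ℕ) (ε : ℝ) (h1 h2 : Ep n → ℝ)
    (A : Fin n → Fin n → Fin N → Fin N → Efull n → ℝ)
    (B : Fin n → Fin N → Fin N → Efull n → ℝ)
    (Cc : Fin n → Fin N → Fin N → Efull n → ℝ)
    (Dc : Fin N → Fin N → Efull n → ℝ)
    (u : Efull n → EuclideanSpace ℝ (Fin N)) : Prop :=
  ContDiffOn ℝ 1 u (Omega n ε h1 h2 1) ∧
  IntegrableOn (fun x => ‖u x‖^2 + ‖fderiv ℝ u x‖^2) (Omega n ε h1 h2 1) ∧
  ∀ ζ : Efull n → EuclideanSpace ℝ (Fin N), ContDiff ℝ (⊤ : ℕ∞) ζ →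
    HasCompactSupport ζ → tsupport ζ ⊆ Omega n ε h1 h2 1 →
    (∫ x in Omega n ε h1 h2 1,
      ((∑ α : Fin n, ∑ i : Fin N,
          ((∑ β : Fin n, ∑ j : Fin N, A α β i j x * fderiv ℝ u x (dir n β) j) +
            ∑ j : Fin N, B α i j x * u x j) * fderiv ℝ ζ x (dir n α) i) -
        ∑ i : Fin N,
          ((∑ β : Fin n, ∑ j : Fin N, Cc β i j x * fderiv ℝ u x (dir n β) j) +
            ∑ j : Fin N, Dc i j x * u x j) * ζ x i)) = 0

/-- `u` attains the boundary values `(φ, ψ)` on `Γ₁⁺` and `Γ₁⁻`. -/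
def AttainsBV {F : Type*} [NormedAddCommGroup F] [NormedSpace ℝ F] (n : ℕ) (ε : ℝ)
    (h1 h2 : Ep n → ℝ) (u : Efull n → F) (φ ψ : Ep n → F) : Prop :=
  ContinuousOn u (Omega n ε h1 h2 1 ∪ Gammap n ε h1 1 ∪ Gammam n ε h2 1) ∧
  (∀ y : Ep n, ‖y‖ ≤ 1 → u (y, ε/2 + h1 y) = φ y ∧ u (y, -ε/2 + h2 y) = ψ y)

/-- `u` is a harmonic function on `Ω₁` with boundary values `φ` on `Γ₁⁺` and `ψ` on `Γ₁⁻`. -/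
def HarmBV (n : ℕ) (ε : ℝ) (h1 h2 : Ep n → ℝ) (u : Efull n → ℝ) (φ ψ : Ep n → ℝ) : Prop :=
  ContDiffOn ℝ 2 u (Omega n ε h1 h2 1) ∧
  (∀ x ∈ Omega n ε h1 h2 1, lapl n u x = 0) ∧
  IntegrableOn (fun x => ‖u x‖^2 + ‖fderiv ℝ u x‖^2) (Omega n ε h1 h2 1) ∧
  AttainsBV n ε h1 h2 u φ ψ

/-!
Write `ū = f / g` with `g = δ` the gap and `f = x_n - h2 + ε/2` the height above the lower graph, so
that `0 < ū < 1` in `Ω₁`. Differentiating `ū g = f` once and twice gives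
`g ∂_v ū = ∂_v f - ū ∂_v g` and
`g ∂_v ∂_w ū = ∂_v ∂_w f - ∂_v ū ∂_w g - ∂_v g ∂_w ū - ū ∂_v ∂_w g`.
Since the gradients of the `h_i` vanish at the origin, the mean value inequality bounds the
tangential derivatives of `f` and `g` by `κ1 |x'|`, so the first identity yields
`|∂_v ū| ≤ 2 κ1 |x'| / g`. As `|x'|² ≤ C₀ g`, every term on the right of the second identity is then
bounded, and dividing by `g ≥ (ε + |x'|²) / C₀` gives the tangential estimate. In the vertical
direction `∂_n ū = 1 / g`, which gives the other two claims.

`C2norm` is a real supremum of full Fréchet derivatives over the closed ball, and these may be junk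
on the unit sphere; that the supremum is over a bounded family is therefore part of the proof.
-/

open scoped Topology

section DirectionalDerivatives

variable {𝕜 : Type*} [NontriviallyNormedField 𝕜]
  {E : Type*} [NormedAddCommGroup E] [NormedSpace 𝕜 E]
  {E' : Type*} [NormedAddCommGroup E'] [NormedSpace 𝕜 E']
  {F : Type*} [NormedAddCommGroup F] [NormedSpace 𝕜 F]

lemma eventually_differentiableAt_of_contDiffAt_two {f : E → F} {x : E}
    (hf : ContDiffAt 𝕜 2 f x) : ∀ᶠ y in 𝓝 x, DifferentiableAt 𝕜 f y :=
  (hf.eventually (by simp)).mono fun _ hy => hy.differentiableAt two_ne_zero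

lemma differentiableAt_fderiv_of_contDiffAt_two {f : E → F} {x : E}
    (hf : ContDiffAt 𝕜 2 f x) : DifferentiableAt 𝕜 (fderiv 𝕜 f) x :=
  (hf.fderiv_right (m := 1) one_add_one_eq_two.le).differentiableAt one_ne_zero

lemma differentiableAt_fderiv_apply {f : E → F} {x : E} (hf : ContDiffAt 𝕜 2 f x) (w : E) :
    DifferentiableAt 𝕜 (fun y => fderiv 𝕜 f y w) x :=
  (differentiableAt_fderiv_of_contDiffAt_two hf).clm_apply (differentiableAt_const w)

lemma fderiv_fderiv_apply {f : E → F} {x : E} (hf : ContDiffAt 𝕜 2 f x) (v w : E) :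
    fderiv 𝕜 (fun y => fderiv 𝕜 f y w) x v = fderiv 𝕜 (fderiv 𝕜 f) x v w := by
  rw [fderiv_clm_apply (differentiableAt_fderiv_of_contDiffAt_two hf) (differentiableAt_const w)]
  simp

lemma fderiv_fderiv_sub_apply {f g : E → F} {x : E} (hf : ContDiffAt 𝕜 2 f x)
    (hg : ContDiffAt 𝕜 2 g x) (v w : E) :
    fderiv 𝕜 (fun y => fderiv 𝕜 (fun z => f z - g z) y w) x v =
      fderiv 𝕜 (fun y => fderiv 𝕜 f y w) x v - fderiv 𝕜 (fun y => fderiv 𝕜 g y w) x v := by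
  have first_order : (fun y => fderiv 𝕜 (fun z => f z - g z) y w) =ᶠ[𝓝 x]
      fun y => fderiv 𝕜 f y w - fderiv 𝕜 g y w := by
    filter_upwards [eventually_differentiableAt_of_contDiffAt_two hf,
      eventually_differentiableAt_of_contDiffAt_two hg] with y hfy hgy
    rw [fderiv_fun_sub hfy hgy, sub_apply]
  rw [first_order.fderiv_eq, fderiv_fun_sub (differentiableAt_fderiv_apply hf w)
    (differentiableAt_fderiv_apply hg w), sub_apply]

lemma fderiv_fderiv_mul_apply {f g : E → 𝕜} {x : E} (hf : ContDiffAt 𝕜 2 f x)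
    (hg : ContDiffAt 𝕜 2 g x) (v w : E) :
    fderiv 𝕜 (fun y => fderiv 𝕜 (fun z => f z * g z) y w) x v =
      f x * fderiv 𝕜 (fun y => fderiv 𝕜 g y w) x v + fderiv 𝕜 f x v * fderiv 𝕜 g x w +
        fderiv 𝕜 g x v * fderiv 𝕜 f x w + g x * fderiv 𝕜 (fun y => fderiv 𝕜 f y w) x v := by
  have first_order : (fun y => fderiv 𝕜 (fun z => f z * g z) y w) =ᶠ[𝓝 x]
      fun y => f y * fderiv 𝕜 g y w + g y * fderiv 𝕜 f y w := by
    filter_upwards [eventually_differentiableAt_of_contDiffAt_two hf,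
      eventually_differentiableAt_of_contDiffAt_two hg] with y hfy hgy
    simp [fderiv_fun_mul hfy hgy]
  have hfx := hf.differentiableAt two_ne_zero
  have hgx := hg.differentiableAt two_ne_zero
  have hf' := differentiableAt_fderiv_apply hf w
  have hg' := differentiableAt_fderiv_apply hg w
  rw [first_order.fderiv_eq, fderiv_fun_add (hfx.fun_mul hg') (hgx.fun_mul hf'),
    fderiv_fun_mul hfx hg', fderiv_fun_mul hgx hf']
  simp only [add_apply, smul_apply, smul_eq_mul]
  ring

lemma fderiv_comp_fst_apply {f : E → F} {x : E × E'} (hf : DifferentiableAt 𝕜 f x.1)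
    (v : E × E') : fderiv 𝕜 (fun y : E × E' => f y.1) x v = fderiv 𝕜 f x.1 v.1 := by
  rw [fderiv_fun_comp x hf differentiableAt_fst, fderiv_fst]
  rfl

lemma fderiv_fderiv_comp_fst_apply {f : E → F} {x : E × E'} (hf : ContDiffAt 𝕜 2 f x.1)
    (v w : E × E') :
    fderiv 𝕜 (fun y => fderiv 𝕜 (fun z : E × E' => f z.1) y w) x v =
      fderiv 𝕜 (fun y => fderiv 𝕜 f y w.1) x.1 v.1 := by
  have first_order : (fun y => fderiv 𝕜 (fun z : E × E' => f z.1) y w) =ᶠ[𝓝 x]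
      fun y => fderiv 𝕜 f y.1 w.1 := by
    filter_upwards [continuousAt_fst.eventually
      (eventually_differentiableAt_of_contDiffAt_two hf)] with y hy
    exact fderiv_comp_fst_apply hy w
  rw [first_order.fderiv_eq, fderiv_comp_fst_apply (differentiableAt_fderiv_apply hf w.1)]

lemma eventuallyEq_div_mul_cancel {X : Type*} [TopologicalSpace X] {f g : X → 𝕜} {x : X}
    (hg : ContinuousAt g x) (hgx : g x ≠ 0) : (fun y => f y / g y * g y) =ᶠ[𝓝 x] f := by
  filter_upwards [hg.eventually_ne hgx] with y hy using div_mul_cancel₀ _ hy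

lemma mul_fderiv_div_apply {f g : E → 𝕜} {x : E} (hf : DifferentiableAt 𝕜 f x)
    (hg : DifferentiableAt 𝕜 g x) (hgx : g x ≠ 0) (v : E) :
    g x * fderiv 𝕜 (fun y => f y / g y) x v = fderiv 𝕜 f x v - f x / g x * fderiv 𝕜 g x v := by
  have leibniz : fderiv 𝕜 f x v =
      f x / g x * fderiv 𝕜 g x v + g x * fderiv 𝕜 (fun y => f y / g y) x v := by
    rw [← (eventuallyEq_div_mul_cancel hg.continuousAt hgx).fderiv_eq,
      fderiv_fun_mul (by fun_prop (disch := exact hgx)) hg]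
    simp
  linear_combination -leibniz

-- Differentiating `(f / g) * g = f` twice avoids the powers of `g` in the quotient rule.
lemma mul_fderiv_fderiv_div_apply {f g : E → 𝕜} {x : E} (hf : ContDiffAt 𝕜 2 f x)
    (hg : ContDiffAt 𝕜 2 g x) (hgx : g x ≠ 0) (v w : E) :
    g x * fderiv 𝕜 (fun y => fderiv 𝕜 (fun z => f z / g z) y w) x v =
      fderiv 𝕜 (fun y => fderiv 𝕜 f y w) x v
        - fderiv 𝕜 (fun y => f y / g y) x v * fderiv 𝕜 g x w
        - fderiv 𝕜 g x v * fderiv 𝕜 (fun y => f y / g y) x w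
        - f x / g x * fderiv 𝕜 (fun y => fderiv 𝕜 g y w) x v := by
  have first_order : (fun y => fderiv 𝕜 (fun z => f z / g z * g z) y w) =ᶠ[𝓝 x]
      fun y => fderiv 𝕜 f y w :=
    (eventuallyEq_div_mul_cancel hg.continuousAt hgx).fderiv.fun_comp (· w)
  have leibniz := fderiv_fderiv_mul_apply (hf.fun_div hg hgx) hg v w
  rw [first_order.fderiv_eq] at leibniz
  linear_combination -leibniz

end DirectionalDerivatives

section QuotientEstimates

variable {E : Type*} [NormedAddCommGroup E] [NormedSpace ℝ E] {f g : E → ℝ} {x v w : E} {a c : ℝ}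

lemma abs_fderiv_div_apply_le (hf : DifferentiableAt ℝ f x) (hg : DifferentiableAt ℝ g x)
    (hgx : 0 < g x) (hfg : |f x / g x| ≤ 1)
    (hfv : |fderiv ℝ f x v| ≤ a) (hgv : |fderiv ℝ g x v| ≤ a) :
    |fderiv ℝ (fun y => f y / g y) x v| ≤ 2 * a / g x := by
  rw [le_div_iff₀' hgx]
  calc g x * |fderiv ℝ (fun y => f y / g y) x v|
      = |fderiv ℝ f x v - f x / g x * fderiv ℝ g x v| := by
        rw [← mul_fderiv_div_apply hf hg hgx.ne', abs_mul, abs_of_pos hgx]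
    _ ≤ |fderiv ℝ f x v| + |f x / g x| * |fderiv ℝ g x v| := by
        rw [← abs_mul]; exact abs_sub _ _
    _ ≤ a + 1 * a := by gcongr
    _ = 2 * a := by ring

lemma abs_fderiv_fderiv_div_apply_le (hf : ContDiffAt ℝ 2 f x) (hg : ContDiffAt ℝ 2 g x)
    (hgx : 0 < g x) (hfg : |f x / g x| ≤ 1)
    (hfv : |fderiv ℝ f x v| ≤ a) (hgv : |fderiv ℝ g x v| ≤ a)
    (hfw : |fderiv ℝ f x w| ≤ a) (hgw : |fderiv ℝ g x w| ≤ a)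
    (hfvw : |fderiv ℝ (fun y => fderiv ℝ f y w) x v| ≤ c)
    (hgvw : |fderiv ℝ (fun y => fderiv ℝ g y w) x v| ≤ c) :
    |fderiv ℝ (fun y => fderiv ℝ (fun z => f z / g z) y w) x v| ≤
      (2 * c + 4 * a ^ 2 / g x) / g x := by
  have hf' := hf.differentiableAt two_ne_zero
  have hg' := hg.differentiableAt two_ne_zero
  have bound_v := abs_fderiv_div_apply_le hf' hg' hgx hfg hfv hgv
  have bound_w := abs_fderiv_div_apply_le hf' hg' hgx hfg hfw hgw
  have ha : 0 ≤ a := (abs_nonneg _).trans hfv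
  rw [le_div_iff₀' hgx]
  calc g x * |fderiv ℝ (fun y => fderiv ℝ (fun z => f z / g z) y w) x v|
      = |fderiv ℝ (fun y => fderiv ℝ f y w) x v
        - fderiv ℝ (fun y => f y / g y) x v * fderiv ℝ g x w
        - fderiv ℝ g x v * fderiv ℝ (fun y => f y / g y) x w
        - f x / g x * fderiv ℝ (fun y => fderiv ℝ g y w) x v| := by
        rw [← mul_fderiv_fderiv_div_apply hf hg hgx.ne', abs_mul, abs_of_pos hgx]
    _ ≤ |fderiv ℝ (fun y => fderiv ℝ f y w) x v|
        + |fderiv ℝ (fun y => f y / g y) x v| * |fderiv ℝ g x w|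
        + |fderiv ℝ g x v| * |fderiv ℝ (fun y => f y / g y) x w|
        + |f x / g x| * |fderiv ℝ (fun y => fderiv ℝ g y w) x v| := by
        simp only [← abs_mul]
        refine (abs_sub _ _).trans ?_
        gcongr
        refine (abs_sub _ _).trans ?_
        gcongr
        exact abs_sub _ _
    _ ≤ c + 2 * a / g x * a + a * (2 * a / g x) + 1 * c := by gcongr
    _ = 2 * c + 4 * a ^ 2 / g x := by ring

end QuotientEstimates

section GraphInterp

variable {V : Type*} [NormedAddCommGroup V] [NormedSpace ℝ V]
  {b t : V → ℝ} {x : V × ℝ} {v w : V} {a c : ℝ}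

/-- The function on the region between the graphs of `b` (bottom) and `t` (top) that is affine in
the vertical variable, equal to `0` on the bottom and to `1` on the top. The function `ubar` is the
case `b = -ε/2 + h2`, `t = ε/2 + h1`. -/
def graphInterp (b t : V → ℝ) (x : V × ℝ) : ℝ := (x.2 - b x.1) / (t x.1 - b x.1)

lemma ubar_eq_graphInterp (n : ℕ) (ε : ℝ) (h1 h2 : Ep n → ℝ) :
    ubar n ε h1 h2 = graphInterp (fun y => -ε / 2 + h2 y) (fun y => ε / 2 + h1 y) := by
  funext x
  unfold ubar graphInterp
  congr 1 <;> ring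

lemma norm_apply_apply_le (L : V →L[ℝ] V →L[ℝ] ℝ) (hv : ‖v‖ ≤ 1) (hw : ‖w‖ ≤ 1) :
    ‖L v w‖ ≤ ‖L‖ :=
  ((L v).unit_le_opNorm w hw).trans (L.unit_le_opNorm v hv)

lemma fderiv_snd_sub_comp_fst_apply (hb : DifferentiableAt ℝ b x.1) (p : V × ℝ) :
    fderiv ℝ (fun y : V × ℝ => y.2 - b y.1) x p = p.2 - fderiv ℝ b x.1 p.1 := by
  rw [fderiv_fun_sub differentiableAt_snd (by fun_prop), sub_apply, fderiv_snd,
    fderiv_comp_fst_apply hb]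
  rfl

lemma fderiv_fderiv_snd_sub_comp_fst_apply (hb : ContDiffAt ℝ 2 b x.1) (p q : V × ℝ) :
    fderiv ℝ (fun y => fderiv ℝ (fun z : V × ℝ => z.2 - b z.1) y q) x p =
      -fderiv ℝ (fderiv ℝ b) x.1 p.1 q.1 := by
  rw [fderiv_fderiv_sub_apply contDiffAt_snd hb.fst'', fderiv_fderiv_comp_fst_apply hb,
    fderiv_fderiv_apply hb]
  simp [fderiv_snd]

lemma fderiv_sub_comp_fst_apply (hb : DifferentiableAt ℝ b x.1) (ht : DifferentiableAt ℝ t x.1)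
    (p : V × ℝ) :
    fderiv ℝ (fun y : V × ℝ => t y.1 - b y.1) x p = (fderiv ℝ t x.1 - fderiv ℝ b x.1) p.1 := by
  rw [fderiv_comp_fst_apply (f := fun y => t y - b y) (ht.fun_sub hb), fderiv_fun_sub ht hb]

lemma fderiv_fderiv_sub_comp_fst_apply (hb : ContDiffAt ℝ 2 b x.1) (ht : ContDiffAt ℝ 2 t x.1)
    (p q : V × ℝ) :
    fderiv ℝ (fun y => fderiv ℝ (fun z : V × ℝ => t z.1 - b z.1) y q) x p =
      (fderiv ℝ (fderiv ℝ t) x.1 - fderiv ℝ (fderiv ℝ b) x.1) p.1 q.1 := by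
  rw [fderiv_fderiv_sub_apply ht.fst'' hb.fst'', fderiv_fderiv_comp_fst_apply ht,
    fderiv_fderiv_comp_fst_apply hb, fderiv_fderiv_apply ht, fderiv_fderiv_apply hb]
  rfl

lemma fderiv_graphInterp_vertical (hb : DifferentiableAt ℝ b x.1) (ht : DifferentiableAt ℝ t x.1)
    (hgap : t x.1 - b x.1 ≠ 0) :
    fderiv ℝ (graphInterp b t) x (0, 1) = 1 / (t x.1 - b x.1) := by
  have quotient_rule : (t x.1 - b x.1) * fderiv ℝ (graphInterp b t) x (0, 1) = _ :=
    mul_fderiv_div_apply (f := fun y : V × ℝ => y.2 - b y.1) (g := fun y => t y.1 - b y.1)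
      (by fun_prop) (by fun_prop) hgap (0, 1)
  rw [eq_div_iff hgap, mul_comm, quotient_rule, fderiv_snd_sub_comp_fst_apply hb,
    fderiv_sub_comp_fst_apply hb ht]
  simp

lemma fderiv_fderiv_graphInterp_vertical (hb : ContDiffAt ℝ 2 b x.1) (ht : ContDiffAt ℝ 2 t x.1)
    (hgap : t x.1 - b x.1 ≠ 0) (p : V × ℝ) :
    fderiv ℝ (fun y => fderiv ℝ (graphInterp b t) y (0, 1)) x p =
      -(fderiv ℝ t x.1 - fderiv ℝ b x.1) p.1 / (t x.1 - b x.1) ^ 2 := by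
  have first_order : (fun y => fderiv ℝ (graphInterp b t) y (0, 1)) =ᶠ[𝓝 x]
      fun y => 1 / (t y.1 - b y.1) := by
    filter_upwards [continuousAt_fst.eventually (eventually_differentiableAt_of_contDiffAt_two hb),
      continuousAt_fst.eventually (eventually_differentiableAt_of_contDiffAt_two ht),
      (ht.fst''.sub hb.fst'').continuousAt.eventually_ne hgap] with y hby hty hy
    exact fderiv_graphInterp_vertical hby hty hy
  have hb' := hb.differentiableAt two_ne_zero
  have ht' := ht.differentiableAt two_ne_zero
  have quotient_rule := mul_fderiv_div_apply (f := fun _ : V × ℝ => (1 : ℝ))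
    (g := fun y => t y.1 - b y.1) (by fun_prop) (by fun_prop) hgap p
  rw [fderiv_sub_comp_fst_apply hb' ht', fderiv_fun_const, Pi.zero_apply, zero_apply, zero_sub]
    at quotient_rule
  rw [first_order.fderiv_eq, ← mul_right_inj' hgap, quotient_rule]
  field_simp

lemma abs_fderiv_fderiv_graphInterp_mixed_le (hb : ContDiffAt ℝ 2 b x.1)
    (ht : ContDiffAt ℝ 2 t x.1) (hgap : t x.1 - b x.1 ≠ 0) (hv : ‖v‖ ≤ 1)
    (hgrad : ‖fderiv ℝ t x.1‖ + ‖fderiv ℝ b x.1‖ ≤ a) :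
    |fderiv ℝ (fun y => fderiv ℝ (graphInterp b t) y (0, 1)) x (v, 0)| ≤
      a / (t x.1 - b x.1) ^ 2 := by
  rw [fderiv_fderiv_graphInterp_vertical hb ht hgap, abs_div, abs_neg, abs_sq]
  gcongr
  exact ((fderiv ℝ t x.1 - fderiv ℝ b x.1).unit_le_opNorm v hv).trans
    ((norm_sub_le _ _).trans hgrad)

lemma abs_fderiv_fderiv_graphInterp_tangential_le (hb : ContDiffAt ℝ 2 b x.1)
    (ht : ContDiffAt ℝ 2 t x.1) (hbx : b x.1 < x.2) (hxt : x.2 < t x.1)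
    (hv : ‖v‖ ≤ 1) (hw : ‖w‖ ≤ 1)
    (hgrad : ‖fderiv ℝ t x.1‖ + ‖fderiv ℝ b x.1‖ ≤ a)
    (hhess : ‖fderiv ℝ (fderiv ℝ t) x.1‖ + ‖fderiv ℝ (fderiv ℝ b) x.1‖ ≤ c) :
    |fderiv ℝ (fun y => fderiv ℝ (graphInterp b t) y (w, 0)) x (v, 0)| ≤
      (2 * c + 4 * a ^ 2 / (t x.1 - b x.1)) / (t x.1 - b x.1) := by
  have hb' := hb.differentiableAt two_ne_zero
  have ht' := ht.differentiableAt two_ne_zero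
  have hgap : 0 < t x.1 - b x.1 := by linarith
  have ratio_le_one : |(x.2 - b x.1) / (t x.1 - b x.1)| ≤ 1 := by
    rw [abs_of_pos (div_pos (by linarith) hgap), div_le_one hgap]
    linarith
  have height_grad {u : V} (hu : ‖u‖ ≤ 1) :
      |fderiv ℝ (fun y : V × ℝ => y.2 - b y.1) x (u, 0)| ≤ a := by
    rw [fderiv_snd_sub_comp_fst_apply hb', zero_sub, abs_neg]
    exact ((fderiv ℝ b x.1).unit_le_opNorm u hu).trans
      ((le_add_of_nonneg_left (norm_nonneg _)).trans hgrad)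
  have gap_grad {u : V} (hu : ‖u‖ ≤ 1) :
      |fderiv ℝ (fun y : V × ℝ => t y.1 - b y.1) x (u, 0)| ≤ a := by
    rw [fderiv_sub_comp_fst_apply hb' ht']
    exact ((fderiv ℝ t x.1 - fderiv ℝ b x.1).unit_le_opNorm u hu).trans
      ((norm_sub_le _ _).trans hgrad)
  refine abs_fderiv_fderiv_div_apply_le (contDiffAt_snd.sub hb.fst'') (ht.fst''.sub hb.fst'') hgap
    ratio_le_one (height_grad hv) (gap_grad hv) (height_grad hw) (gap_grad hw) ?_ ?_
  · rw [fderiv_fderiv_snd_sub_comp_fst_apply hb, abs_neg]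
    exact (norm_apply_apply_le _ hv hw).trans
      ((le_add_of_nonneg_left (by positivity)).trans hhess)
  · rw [fderiv_fderiv_sub_comp_fst_apply hb ht]
    exact (norm_apply_apply_le _ hv hw).trans
      ((norm_sub_le (E := V →L[ℝ] V →L[ℝ] ℝ) _ _).trans hhess)

end GraphInterp

section C2Bounds

variable {E : Type*} [NormedAddCommGroup E] [NormedSpace ℝ E]
  {F : Type*} [NormedAddCommGroup F] [NormedSpace ℝ F] {f : E → F} {s : Set E} {x : E}

-- At a boundary point `f x` may be unrelated to `k x`, but then `f` is discontinuous there and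
-- `fderiv ℝ f x` is the junk value `0`.
lemma norm_fderiv_le_norm_fderivWithin_of_eqOn_interior {k : E → F} (hs : Convex ℝ s)
    (hs' : (interior s).Nonempty) (hk : DifferentiableWithinAt ℝ k s x)
    (hfk : Set.EqOn f k (interior s)) (hx : x ∈ s) :
    ‖fderiv ℝ f x‖ ≤ ‖fderivWithin ℝ k s x‖ := by
  by_cases hf : DifferentiableAt ℝ f x
  · have hxcl : x ∈ closure (interior s) := by
      rw [hs.closure_interior_eq_closure_of_nonempty_interior hs']
      exact subset_closure hx
    have hunique : UniqueDiffWithinAt ℝ (interior s) x :=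
      uniqueDiffWithinAt_convex hs.interior (by rwa [interior_interior]) hxcl
    have eq_at : f x = k x := by
      have := mem_closure_iff_nhdsWithin_neBot.1 hxcl
      exact tendsto_nhds_unique_of_eventuallyEq hf.continuousAt.continuousWithinAt
        (hk.continuousWithinAt.mono interior_subset) hfk.eventuallyEq_nhdsWithin
    rw [← hf.fderivWithin hunique, fderivWithin_congr hfk eq_at,
      fderivWithin_subset interior_subset hunique hk]
  · rw [fderiv_zero_of_not_differentiableAt hf, norm_zero]
    exact norm_nonneg _

lemma bddAbove_range_norm_add_norm_fderiv_add_norm_fderiv_fderiv (hs : Convex ℝ s)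
    (hs' : (interior s).Nonempty) (hsc : IsCompact s) (hf : ContDiffOn ℝ 2 f s) :
    BddAbove (Set.range fun y : s => ‖f y‖ + ‖fderiv ℝ f y‖ + ‖fderiv ℝ (fderiv ℝ f) y‖) := by
  have hunique := uniqueDiffOn_convex hs hs'
  have hf' : ContDiffOn ℝ 1 (fderivWithin ℝ f s) s :=
    hf.fderivWithin hunique one_add_one_eq_two.le
  have hf'' : ContinuousOn (fderivWithin ℝ (fderivWithin ℝ f s) s) s :=
    hf'.continuousOn_fderivWithin hunique le_rfl
  obtain ⟨M, hM⟩ := hsc.bddAbove_image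
    ((hf.continuousOn.norm.add hf'.continuousOn.norm).add (hf''.norm (E := E →L[ℝ] E →L[ℝ] F)))
  refine ⟨M, ?_⟩
  rintro _ ⟨⟨y, hy⟩, rfl⟩
  refine le_trans ?_ (hM (Set.mem_image_of_mem _ hy))
  have eq_interior : Set.EqOn (fderiv ℝ f) (fderivWithin ℝ f s) (interior s) := fun z hz =>
    (fderivWithin_of_mem_nhds (mem_interior_iff_mem_nhds.1 hz)).symm
  exact add_le_add
    (add_le_add le_rfl (norm_fderiv_le_norm_fderivWithin_of_eqOn_interior hs hs'
      (hf.differentiableOn two_ne_zero y hy) (Set.eqOn_refl f _) hy))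
    (norm_fderiv_le_norm_fderivWithin_of_eqOn_interior hs hs'
      (hf'.differentiableOn one_ne_zero y hy) eq_interior hy)

lemma norm_fderiv_le_mul_norm {r K : ℝ} (hf : ∀ y ∈ ball (0 : E) r, ContDiffAt ℝ 2 f y)
    (hK : ∀ y ∈ ball (0 : E) r, ‖fderiv ℝ (fderiv ℝ f) y‖ ≤ K) (h0 : fderiv ℝ f 0 = 0)
    (hx : x ∈ ball (0 : E) r) : ‖fderiv ℝ f x‖ ≤ K * ‖x‖ := by
  have mean_value := (convex_ball (0 : E) r).norm_image_sub_le_of_norm_fderiv_le (𝕜 := ℝ)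
    (fun y hy => differentiableAt_fderiv_of_contDiffAt_two (hf y hy)) hK
    (mem_ball_self (pos_of_mem_ball hx)) hx
  rwa [h0, sub_zero, sub_zero] at mean_value

end C2Bounds

section C2norm

variable {n : ℕ} {F : Type*} [NormedAddCommGroup F] [NormedSpace ℝ F] {f : Ep n → F} {y : Ep n}

lemma contDiffAt_of_contDiffOn_closedBall (hf : ContDiffOn ℝ 2 f (closedBall 0 1))
    (hy : y ∈ ball 0 1) : ContDiffAt ℝ 2 f y :=
  hf.contDiffAt (Filter.mem_of_superset (isOpen_ball.mem_nhds hy) ball_subset_closedBall)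

lemma norm_fderiv_fderiv_le_C2norm (hf : ContDiffOn ℝ 2 f (closedBall 0 1))
    (hy : y ∈ closedBall 0 1) : ‖fderiv ℝ (fderiv ℝ f) y‖ ≤ C2norm n f := by
  have hinterior : (interior (closedBall (0 : Ep n) 1)).Nonempty :=
    ⟨0, ball_subset_interior_closedBall (mem_ball_self one_pos)⟩
  refine le_trans ?_ (le_ciSup (bddAbove_range_norm_add_norm_fderiv_add_norm_fderiv_fderiv
    (convex_closedBall 0 1) hinterior (isCompact_closedBall 0 1) hf) ⟨y, hy⟩)
  exact le_add_of_nonneg_left (by positivity)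

lemma norm_fderiv_le_C2norm_mul_norm (hf : ContDiffOn ℝ 2 f (closedBall 0 1))
    (h0 : fderiv ℝ f 0 = 0) (hy : y ∈ ball 0 1) : ‖fderiv ℝ f y‖ ≤ C2norm n f * ‖y‖ :=
  norm_fderiv_le_mul_norm (fun _ => contDiffAt_of_contDiffOn_closedBall hf)
    (fun _ hz => norm_fderiv_fderiv_le_C2norm hf (ball_subset_closedBall hz)) h0 hy

lemma norm_fderiv_add_norm_fderiv_le_mul_norm {g : Ep n → F} {κ : ℝ}
    (hf : ContDiffOn ℝ 2 f (closedBall 0 1)) (hg : ContDiffOn ℝ 2 g (closedBall 0 1))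
    (hf0 : fderiv ℝ f 0 = 0) (hg0 : fderiv ℝ g 0 = 0) (hκ : C2norm n f + C2norm n g ≤ κ)
    (hy : y ∈ ball 0 1) : ‖fderiv ℝ f y‖ + ‖fderiv ℝ g y‖ ≤ κ * ‖y‖ :=
  calc ‖fderiv ℝ f y‖ + ‖fderiv ℝ g y‖ ≤ C2norm n f * ‖y‖ + C2norm n g * ‖y‖ :=
        add_le_add (norm_fderiv_le_C2norm_mul_norm hf hf0 hy)
          (norm_fderiv_le_C2norm_mul_norm hg hg0 hy)
    _ = (C2norm n f + C2norm n g) * ‖y‖ := by ring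
    _ ≤ κ * ‖y‖ := by gcongr

end C2norm

section Constants

variable {κ C₀ s ρ d : ℝ}

lemma tangential_bound_le (hκ : 0 ≤ κ) (hC₀ : 0 ≤ C₀) (hs : 0 < s) (hd : 0 < d)
    (hsd : s ≤ C₀ * d) (hρ : ρ ^ 2 ≤ s) :
    (2 * κ + 4 * (κ * ρ) ^ 2 / d) / d ≤ (2 * κ + 4 * κ ^ 2 * C₀) * C₀ / s := by
  have quadratic : 4 * (κ * ρ) ^ 2 / d ≤ 4 * κ ^ 2 * C₀ := by
    rw [div_le_iff₀ hd]
    calc 4 * (κ * ρ) ^ 2 = 4 * κ ^ 2 * ρ ^ 2 := by ring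
      _ ≤ 4 * κ ^ 2 * (C₀ * d) := by gcongr; exact hρ.trans hsd
      _ = 4 * κ ^ 2 * C₀ * d := by ring
  rw [div_le_div_iff₀ hd hs, mul_assoc _ C₀]
  gcongr

lemma mixed_bound_le (hκ : 0 ≤ κ) (hρ : 0 ≤ ρ) (hs : 0 < s) (hd : 0 < d)
    (hsd : s ≤ C₀ * d) : κ * ρ / d ^ 2 ≤ κ * C₀ ^ 2 * ρ / s ^ 2 := by
  rw [div_le_div_iff₀ (by positivity) (by positivity)]
  calc κ * ρ * s ^ 2 ≤ κ * ρ * (C₀ * d) ^ 2 := by gcongr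
    _ = κ * C₀ ^ 2 * ρ * d ^ 2 := by ring

end Constants

theorem stmt7_general (n : ℕ) (κ1 C₀ : ℝ) (hκ1 : 0 < κ1) (hC₀ : 0 < C₀) :
    ∃ C : ℝ, 0 < C ∧
      ∀ ε : ℝ, 0 < ε → ∀ h1 h2 : Ep n → ℝ,
        ContDiffOn ℝ 2 h1 (closedBall 0 1) → ContDiffOn ℝ 2 h2 (closedBall 0 1) →
        fderiv ℝ h1 0 = 0 → fderiv ℝ h2 0 = 0 → C2norm n h1 + C2norm n h2 ≤ κ1 →
        ∀ x ∈ Omega n ε h1 h2 1, (ε + ‖x.1‖ ^ 2) / C₀ ≤ ε + h1 x.1 - h2 x.1 →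
        ∀ v w : Ep n, ‖v‖ ≤ 1 → ‖w‖ ≤ 1 →
          |fderiv ℝ (fun y => fderiv ℝ (ubar n ε h1 h2) y (w, 0)) x (v, 0)| ≤
            C / (ε + ‖x.1‖ ^ 2) ∧
          |fderiv ℝ (fun y => fderiv ℝ (ubar n ε h1 h2) y (0, 1)) x (v, 0)| ≤
            C * ‖x.1‖ / (ε + ‖x.1‖ ^ 2) ^ 2 ∧
          fderiv ℝ (fun y => fderiv ℝ (ubar n ε h1 h2) y (0, 1)) x (0, 1) = 0 := by
  set Ctan := (2 * κ1 + 4 * κ1 ^ 2 * C₀) * C₀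
  set Cmix := κ1 * C₀ ^ 2
  refine ⟨max Ctan Cmix, by positivity, fun ε hε h1 h2 hc1 hc2 hflat1 hflat2 hκ x ⟨hx, hbx, hxt⟩
    hδ v w hv hw => ?_⟩
  have hball : x.1 ∈ ball (0 : Ep n) 1 := mem_ball_zero_iff.2 hx
  set b : Ep n → ℝ := fun y => -ε / 2 + h2 y
  set t : Ep n → ℝ := fun y => ε / 2 + h1 y
  have hb : ContDiffAt ℝ 2 b x.1 :=
    contDiffAt_const.add (contDiffAt_of_contDiffOn_closedBall hc2 hball)
  have ht : ContDiffAt ℝ 2 t x.1 :=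
    contDiffAt_const.add (contDiffAt_of_contDiffOn_closedBall hc1 hball)
  have hDb : fderiv ℝ b = fderiv ℝ h2 := funext fun _ => fderiv_const_add _
  have hDt : fderiv ℝ t = fderiv ℝ h1 := funext fun _ => fderiv_const_add _
  have grad_le : ‖fderiv ℝ t x.1‖ + ‖fderiv ℝ b x.1‖ ≤ κ1 * ‖x.1‖ := by
    rw [hDt, hDb]
    exact norm_fderiv_add_norm_fderiv_le_mul_norm hc1 hc2 hflat1 hflat2 hκ hball
  have hess_le : ‖fderiv ℝ (fderiv ℝ t) x.1‖ + ‖fderiv ℝ (fderiv ℝ b) x.1‖ ≤ κ1 := by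
    rw [hDt, hDb]
    exact (add_le_add (norm_fderiv_fderiv_le_C2norm hc1 (ball_subset_closedBall hball))
      (norm_fderiv_fderiv_le_C2norm hc2 (ball_subset_closedBall hball))).trans hκ
  have hgap : 0 < t x.1 - b x.1 := sub_pos.2 (hbx.trans hxt)
  have gap_eq : t x.1 - b x.1 = ε + h1 x.1 - h2 x.1 := by simp only [t, b]; ring
  have hs : 0 < ε + ‖x.1‖ ^ 2 := by positivity
  have hsd : ε + ‖x.1‖ ^ 2 ≤ C₀ * (t x.1 - b x.1) := by rwa [gap_eq, ← div_le_iff₀' hC₀]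
  rw [ubar_eq_graphInterp]
  refine ⟨?_, ?_, ?_⟩
  · refine (abs_fderiv_fderiv_graphInterp_tangential_le hb ht hbx hxt hv hw grad_le hess_le).trans
      ((tangential_bound_le hκ1.le hC₀.le hs hgap hsd (by linarith)).trans ?_)
    gcongr
    exact le_max_left _ _
  · refine (abs_fderiv_fderiv_graphInterp_mixed_le hb ht hgap.ne' hv grad_le).trans
      ((mixed_bound_le hκ1.le (norm_nonneg _) hs hgap hsd).trans ?_)
    gcongr
    exact le_max_right _ _
  · rw [fderiv_fderiv_graphInterp_vertical hb ht hgap.ne']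
    simp

theorem stmt7 (n : ℕ) (hn : 2 ≤ n) (κ1 C₀ : ℝ) (hκ1 : 0 < κ1) (hC₀ : 1 ≤ C₀) :
    ∃ C : ℝ, 0 < C ∧
      ∀ κ0 : ℝ, 0 < κ0 → ∀ ε ∈ Set.Ioo (0:ℝ) 1, ∀ h1 h2 : Ep n → ℝ,
        HGeom n ε κ0 κ1 h1 h2 → DeltaComp n ε C₀ h1 h2 →
        ∀ x ∈ Omega n ε h1 h2 1, ∀ α β : Fin (n - 1),
          |fderiv ℝ (fun y => fderiv ℝ (ubar n ε h1 h2) y (tang n β)) x (tang n α)| ≤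
            C / (ε + ‖x.1‖^2) ∧
          |fderiv ℝ (fun y => fderiv ℝ (ubar n ε h1 h2) y (vert n)) x (tang n α)| ≤
            C * ‖x.1‖ / (ε + ‖x.1‖^2)^2 ∧
          fderiv ℝ (fun y => fderiv ℝ (ubar n ε h1 h2) y (vert n)) x (vert n) = 0 := by
  obtain ⟨C, hC, bounds⟩ := stmt7_general n κ1 C₀ hκ1 (by linarith)
  exact ⟨C, hC, fun _ _ ε hε h1 h2 ⟨hc1, hc2, _, _, _, hflat1, hflat2, _, hκ⟩ hδ x hx α β =>
    bounds ε hε.1 h1 h2 hc1 hc2 hflat1 hflat2 hκ x hx (hδ x.1 hx.1.le).1 _ _ (by simp) (by simp)⟩
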